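/- Let k ≤ n be positive integers, let G be a subgroup of the unitary group U(k), and let 𝔤 be a real subspace of the skew-Hermitian k×k complex matrices such that u⁻¹ x u ∈ 𝔤 for all u ∈ G and x ∈ 𝔤. Equip the space of k×k complex matrices with the real inner product ⟨X,Y⟩ = Re(trace(Xᴴ Y)), and let P denote the orthogonal projection onto 𝔤. Define ω_G(A)(M) := P(AᴴM) for n×k complex matrices A, M with AᴴA = I_k and MᴴA + AᴴM = 0. Then: (i) for every u ∈ G one has the equivariance ω_G(Au)(Mu) = P((Au)ᴴ(Mu)) = u⁻¹ P(AᴴM) u = u⁻¹ ω_G(A)(M) u; (ii) for every x ∈ 𝔤 one has ω_G(A)(Ax) = P(Aᴴ(Ax)) = x; (iii) if j(A) denotes the (n+1)×k matrix obtained from A by appending a row of zeros, then P(j(A)ᴴ j(M)) = P(AᴴM). -/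

import Mathlib

open Matrix

/-- The `(n+1) × k` matrix obtained from an `n × k` matrix by appending a row of zeros;
this realizes the natural inclusion `V_k(ℂⁿ) → V_k(ℂⁿ⁺¹)` on matrices. -/
def appendZeroRow {n k : ℕ} (A : Matrix (Fin n) (Fin k) ℂ) :
    Matrix (Fin (n + 1)) (Fin k) ℂ :=
  Matrix.of fun i j => if h : (i : ℕ) < n then A ⟨(i : ℕ), h⟩ j else 0

/-- The real Frobenius inner product `⟨X, Y⟩ = Re (trace (Xᴴ Y))` on `k × k` complex
matrices. -/
noncomputable def frobeniusInnerRe {k : ℕ} (X Y : Matrix (Fin k) (Fin k) ℂ) : ℝ :=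
  (Xᴴ * Y).trace.re

theorem frob_self_zero {k : ℕ} (D : Matrix (Fin k) (Fin k) ℂ)
    (h : frobeniusInnerRe D D = 0) : D = 0 := by
  have h1 : (∑ j, ∑ i, Complex.normSq (D i j)) = 0 := by
    rw [← h]
    simp [frobeniusInnerRe, Matrix.trace, Matrix.mul_apply, Complex.normSq_apply]
  rw [Finset.sum_eq_zero_iff_of_nonneg
    (fun j _ => Finset.sum_nonneg fun i _ => Complex.normSq_nonneg _)] at h1
  ext i j
  have h2 := h1 j (Finset.mem_univ j)
  rw [Finset.sum_eq_zero_iff_of_nonneg (fun i _ => Complex.normSq_nonneg _)] at h2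
  simpa using h2 i (Finset.mem_univ i)

theorem appendZeroRow_mul {n k : ℕ} (A M : Matrix (Fin n) (Fin k) ℂ) :
    (appendZeroRow A)ᴴ * appendZeroRow M = Aᴴ * M := by
  ext i j
  simp [Matrix.mul_apply, Fin.sum_univ_castSucc, appendZeroRow]

/-- **Proposition 4.2.** Let `G` be a subgroup of `U(k)` and let `𝔤` be a real
subspace of skew-Hermitian `k × k` matrices with `u⁻¹ x u ∈ 𝔤` for all `u ∈ G`, `x ∈ 𝔤`.
Let `P` be the orthogonal projection onto `𝔤` for the real inner product
`⟨X, Y⟩ = Re (trace (Xᴴ Y))`, and set `ω_G(A)(M) = P (AᴴM)` for `A, M` with `AᴴA = I` and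
`MᴴA + AᴴM = 0`. Then: (i) `P ((Au)ᴴ (Mu)) = u⁻¹ P (AᴴM) u` for all `u ∈ G`;
(ii) `P (Aᴴ (Ax)) = x` for all `x ∈ 𝔤`; (iii) `P (j(A)ᴴ j(M)) = P (AᴴM)` for the inclusion
`j` appending a zero row. -/
theorem stiefel_projected_connection {k n : ℕ} (hk : 0 < k) (hkn : k ≤ n)
    (G : Subgroup (Matrix.unitaryGroup (Fin k) ℂ))
    (𝔤 : Submodule ℝ (Matrix (Fin k) (Fin k) ℂ))
    (h𝔤skew : ∀ x ∈ 𝔤, xᴴ = -x)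
    (h𝔤inv : ∀ u : Matrix.unitaryGroup (Fin k) ℂ, u ∈ G →
      ∀ x ∈ 𝔤, (u : Matrix (Fin k) (Fin k) ℂ)⁻¹ * x * (u : Matrix (Fin k) (Fin k) ℂ) ∈ 𝔤)
    (P : Matrix (Fin k) (Fin k) ℂ →ₗ[ℝ] Matrix (Fin k) (Fin k) ℂ)
    (hPmem : ∀ X, P X ∈ 𝔤)
    (hPfix : ∀ X ∈ 𝔤, P X = X)
    (hPorth : ∀ X : Matrix (Fin k) (Fin k) ℂ, ∀ Y ∈ 𝔤, frobeniusInnerRe (X - P X) Y = 0)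
    (A M : Matrix (Fin n) (Fin k) ℂ)
    (hA : Aᴴ * A = 1) (hM : Mᴴ * A + Aᴴ * M = 0) :
    (∀ u : Matrix.unitaryGroup (Fin k) ℂ, u ∈ G →
      P ((A * (u : Matrix (Fin k) (Fin k) ℂ))ᴴ * (M * (u : Matrix (Fin k) (Fin k) ℂ))) =
        (u : Matrix (Fin k) (Fin k) ℂ)⁻¹ * P (Aᴴ * M) * (u : Matrix (Fin k) (Fin k) ℂ)) ∧
    (∀ x ∈ 𝔤, P (Aᴴ * (A * x)) = x) ∧
    P ((appendZeroRow A)ᴴ * appendZeroRow M) = P (Aᴴ * M) := by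
  refine ⟨fun u hu => ?_, fun x hx => ?_, ?_⟩
  · have huu : (u : Matrix (Fin k) (Fin k) ℂ)ᴴ * (u : Matrix (Fin k) (Fin k) ℂ) = 1 := by
      have := Matrix.UnitaryGroup.star_mul_self u
      simpa [Matrix.star_eq_conjTranspose] using this
    have hinv : (u : Matrix (Fin k) (Fin k) ℂ)⁻¹ = (u : Matrix (Fin k) (Fin k) ℂ)ᴴ :=
      Matrix.inv_eq_left_inv huu
    have hconj : ∀ Y ∈ 𝔤, (u : Matrix (Fin k) (Fin k) ℂ) * Y *
        (u : Matrix (Fin k) (Fin k) ℂ)ᴴ ∈ 𝔤 := by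
      intro Y hY
      have h := h𝔤inv u⁻¹ (G.inv_mem hu) Y hY
      have e : ((u⁻¹ : Matrix.unitaryGroup (Fin k) ℂ) : Matrix (Fin k) (Fin k) ℂ) =
          (u : Matrix (Fin k) (Fin k) ℂ)ᴴ := rfl
      rw [e, Matrix.inv_eq_left_inv (mul_eq_one_comm.mp huu)] at h
      exact h
    have hW := h𝔤inv u hu _ (hPmem (Aᴴ * M))
    rw [hinv] at hW ⊢
    have hZ : (A * (u : Matrix (Fin k) (Fin k) ℂ))ᴴ * (M * (u : Matrix (Fin k) (Fin k) ℂ)) =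
        (u : Matrix (Fin k) (Fin k) ℂ)ᴴ * (Aᴴ * M) * (u : Matrix (Fin k) (Fin k) ℂ) := by
      simp only [Matrix.conjTranspose_mul, Matrix.mul_assoc]
    rw [hZ]
    generalize Aᴴ * M = X at *
    generalize (u : Matrix (Fin k) (Fin k) ℂ) = U at *
    have hD := 𝔤.sub_mem (hPmem (Uᴴ * X * U)) hW
    rw [← sub_eq_zero]
    apply frob_self_zero
    have h1 := hPorth (Uᴴ * X * U) _ hD
    have h2 := hPorth X _ (hconj _ hD)
    have h3 : frobeniusInnerRe (Uᴴ * X * U - Uᴴ * P X * U)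
        (P (Uᴴ * X * U) - Uᴴ * P X * U) = 0 := by
      rw [← h2]
      generalize P (Uᴴ * X * U) - Uᴴ * P X * U = D
      unfold frobeniusInnerRe
      rw [← Matrix.sub_mul, ← Matrix.mul_sub, Matrix.conjTranspose_mul, Matrix.conjTranspose_mul,
        Matrix.conjTranspose_conjTranspose, Matrix.mul_assoc, Matrix.trace_mul_comm]
      simp only [Matrix.mul_assoc]
    have key : ∀ a b c d : Matrix (Fin k) (Fin k) ℂ, frobeniusInnerRe (b - c) d =
        frobeniusInnerRe (a - c) d - frobeniusInnerRe (a - b) d := by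
      intro a b c d
      simp only [frobeniusInnerRe, Matrix.conjTranspose_sub, Matrix.sub_mul, Matrix.trace_sub,
        Complex.sub_re]
      ring
    rw [key (Uᴴ * X * U), h3, h1, sub_zero]
  · rw [← Matrix.mul_assoc, hA, Matrix.one_mul, hPfix x hx]
  · rw [appendZeroRow_mul]
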